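/- A tile-set with countably infinitely many tilings produces a tiling with exactly one vector of periodicity: let τ = (Q, 𝒜) be a tile-set whose set of tilings 𝒯_τ is countable and infinite; then there exists c ∈ 𝒯_τ whose stabilizer { v ∈ ℤ² : σ_v(c) = c } is nontrivial (contains some v ≠ 0) but has infinite index in ℤ² (i.e., c has a nonzero period vector but is not periodic). -/

import Mathlib

open Set

/-- A configuration assigns a state to each cell of the plane. -/
abbrev Config (Q : Type*) : Type _ := (ℤ × ℤ) → Q

/-- The shift by a vector `v`: `σ_v c = fun x => c (x + v)`. -/
def shiftC {Q : Type*} (v : ℤ × ℤ) (c : Config Q) : Config Q := fun x => c (x + v)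

/-- The pattern `P` with (finite) domain `V` appears in `c` at translate `t`. -/
def AppearsAt {Q : Type*} (c : Config Q) (V : Finset (ℤ × ℤ)) (P : (ℤ × ℤ) → Q)
    (t : ℤ × ℤ) : Prop :=
  ∀ x ∈ V, c (x + t) = P x

/-- The pattern `P` with (finite) domain `V` appears in `c`. -/
def Appears {Q : Type*} (c : Config Q) (V : Finset (ℤ × ℤ)) (P : (ℤ × ℤ) → Q) : Prop :=
  ∃ t : ℤ × ℤ, AppearsAt c V P t

/-- The pattern preorder: `x ≼ y` iff every pattern appearing in `x` appears in `y`. -/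
def PatLe {Q : Type*} (x y : Config Q) : Prop :=
  ∀ (V : Finset (ℤ × ℤ)) (P : (ℤ × ℤ) → Q), Appears x V P → Appears y V P

/-- A set of configurations is shift-invariant. -/
def ShiftInvariant {Q : Type*} (S : Set (Config Q)) : Prop :=
  ∀ c ∈ S, ∀ v : ℤ × ℤ, shiftC v c ∈ S

/-- `c` is an isolated point of `S` (in the subspace topology). -/
def IsolatedIn {Q : Type*} [TopologicalSpace Q] (S : Set (Config Q)) (c : Config Q) : Prop :=
  ∃ U : Set (Config Q), IsOpen U ∧ U ∩ S = {c}

/-- The topological derivative: the non-isolated points of `S`. -/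
def derivSet {Q : Type*} [TopologicalSpace Q] (S : Set (Config Q)) : Set (Config Q) :=
  {c ∈ S | ¬ IsolatedIn S c}

/-- Transfinite iteration of the topological derivative (Cantor–Bendixson). -/
noncomputable def CBIter {Q : Type*} [TopologicalSpace Q] (S : Set (Config Q))
    (o : Ordinal) : Set (Config Q) :=
  Ordinal.limitRecOn o S (fun _ ih => derivSet ih)
    (fun o _ ih => ⋂ (β : {β : Ordinal // β < o}), ih β.1 β.2)

/-- The Cantor–Bendixson rank of `c` in `S`: least `λ` with `c ∉ S^{(λ)}`. -/
noncomputable def CBRank {Q : Type*} [TopologicalSpace Q] (S : Set (Config Q))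
    (c : Config Q) : Ordinal :=
  sInf {l : Ordinal | c ∉ CBIter S l}

/-- A configuration is periodic iff its shift orbit is finite (equivalently, its
stabilizer has finite index in `ℤ²`). -/
def IsPeriodic {Q : Type*} (c : Config Q) : Prop :=
  (Set.range fun v : ℤ × ℤ => shiftC v c).Finite

/-- `c` is a tiling for the tile-set with domain `V` and allowed patterns `A`. -/
def IsTiling {Q : Type*} (V : Finset (ℤ × ℤ)) (A : Set ({x // x ∈ V} → Q))
    (c : Config Q) : Prop :=
  ∀ t : ℤ × ℤ, (fun y : {x // x ∈ V} => c (t + y.1)) ∈ A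

/-- The set of tilings of a tile-set. -/
def Tilings {Q : Type*} (V : Finset (ℤ × ℤ)) (A : Set ({x // x ∈ V} → Q)) :
    Set (Config Q) :=
  {c | IsTiling V A c}

/-!
By Zorn's lemma there is a minimal infinite subshift `Y` of tilings. Being countable and compact,
`Y` has an isolated point `d`. The points of `Y` outside the orbit of `d` form a proper subshift,
which is finite by minimality; hence the orbit of `d` is infinite, and `Y` minus this orbit consists
of configurations with a common period `P` in both coordinate directions.

If `d` had no nonzero period, then by compactness all but finitely many translates of `d` would
satisfy the local rule that the cells `0`, `(P, 0)` and `(0, P)` agree, so `d` would differ in only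
finitely many cells from a `P`-periodic configuration `p`. Every pattern of `p` then occurs in `d`,
so `p` is a tiling, and the finite defect of `d` can be inserted into `p` at any subset of a sparse
set of places: uncountably many tilings.
-/

open Function
open scoped Pointwise

section General

lemma not_countable_set (ι : Type*) [Infinite ι] : ¬ Countable (Set ι) := by
  intro _
  obtain ⟨f, hf⟩ := exists_injective_nat (Set ι)
  exact cantor_injective _ ((Infinite.natEmbedding ι).injective.comp hf)

lemma exists_isOpen_singleton_of_countable {X : Type*} [TopologicalSpace X] [BaireSpace X]
    [T1Space X] [Countable X] [Nonempty X] : ∃ x : X, IsOpen {x} := by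
  obtain ⟨x, hx⟩ := nonempty_interior_of_iUnion_of_closed (f := fun x : X => {x})
    (fun x => isClosed_singleton) (iUnion_of_singleton X)
  exact ⟨x, interior_eq_iff_isOpen.mp (hx.subset_singleton_iff.mp interior_subset)⟩

lemma iterate_card_perm_eqOn_id {α : Type*} {s : Set α} (hs : s.Finite) {f : α → α}
    (hmaps : MapsTo f s s) (hinj : InjOn f s) : EqOn f^[Nat.card (Equiv.Perm s)] id s := by
  have : Finite s := hs
  let g : Equiv.Perm s :=
    Equiv.ofBijective _ (Finite.injective_iff_bijective.mp (hmaps.restrict_inj.mpr hinj))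
  intro x hx
  calc f^[Nat.card (Equiv.Perm s)] x
      = (hmaps.restrict f s s)^[Nat.card (Equiv.Perm s)] ⟨x, hx⟩ := by
        rw [hmaps.iterate_restrict, MapsTo.val_restrict_apply]
    _ = (g ^ Nat.card (Equiv.Perm s)) ⟨x, hx⟩ := rfl
    _ = x := by rw [pow_card_eq_one', Equiv.Perm.one_apply]

lemma periodic_apply_toIcoMod {G α : Type*} [AddCommGroup G] [LinearOrder G] [IsOrderedAddMonoid G]
    [Archimedean G] {f : G → α} {P : G} (hf : Periodic f P) (hP : 0 < P) (a x : G) :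
    f (toIcoMod hP a x) = f x := by
  rw [← self_sub_toIcoDiv_zsmul, hf.sub_zsmul_eq]

end General

section Translates

variable {G : Type*} [AddCommGroup G] [IsAddTorsionFree G] {v : G}

lemma finite_setOf_zsmul_mem {D : Set G} (hD : D.Finite) (hv : v ≠ 0) :
    {k : ℤ | k • v ∈ D}.Finite :=
  hD.preimage (smul_left_injective ℤ hv).injOn

lemma exists_zsmul_forall_zsmul_notMem {D : Set G} (hD : D.Finite) (hv : v ≠ 0) :
    ∃ m : ℤ, ∀ k : ℤ, k ≠ 0 → k • m • v ∉ D := by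
  obtain ⟨N, hN⟩ := ((finite_setOf_zsmul_mem hD hv).image Int.natAbs).bddAbove
  refine ⟨N + 1, fun k hk hmem => ?_⟩
  have hle : (k * (N + 1)).natAbs ≤ N := hN ⟨k * (N + 1), by rwa [mem_ofPred_eq, mul_smul], rfl⟩
  have hlt : N < (k * (N + 1)).natAbs := by
    rw [Int.natAbs_mul]
    exact lt_of_lt_of_le (by omega) (Nat.le_mul_of_pos_left _ (Int.natAbs_pos.mpr hk))
  exact hlt.not_ge hle

lemma exists_zsmul_separating {F B : Set G} (hF : F.Finite) (hB : B.Finite) (hv : v ≠ 0) :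
    ∃ m : ℤ, ∀ (k l : ℤ) (x y : G),
      x - k • m • v ∈ F → y - l • m • v ∈ F → x - y ∈ B → k = l := by
  obtain ⟨m, hm⟩ := exists_zsmul_forall_zsmul_notMem ((hF.sub hF).sub hB) hv
  refine ⟨m, fun k l x y hx hy hxy => ?_⟩
  by_contra hkl
  refine hm (l - k) (sub_ne_zero.mpr (Ne.symm hkl)) ?_
  convert sub_mem_sub (sub_mem_sub hx hy) hxy using 1
  rw [sub_smul]
  abel

end Translates

section Shift

variable {Q : Type*}

/-- The orbit of a configuration under all shifts. -/
def shiftOrbit (c : Config Q) : Set (Config Q) := range fun v : ℤ × ℤ => shiftC v c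

lemma shiftC_zero (c : Config Q) : shiftC 0 c = c :=
  funext fun x => congrArg c (add_zero x)

lemma shiftC_shiftC (u v : ℤ × ℤ) (c : Config Q) : shiftC u (shiftC v c) = shiftC (u + v) c :=
  funext fun x => congrArg c (add_assoc x u v)

lemma shiftC_neg_shiftC (v : ℤ × ℤ) (c : Config Q) : shiftC (-v) (shiftC v c) = c := by
  rw [shiftC_shiftC, neg_add_cancel, shiftC_zero]

lemma shiftC_neg_eq_iff {v : ℤ × ℤ} {c d : Config Q} : shiftC (-v) c = d ↔ c = shiftC v d := by
  constructor
  · rintro rfl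
    rw [shiftC_shiftC, add_neg_cancel, shiftC_zero]
  · rintro rfl
    exact shiftC_neg_shiftC v d

lemma shiftC_injective (v : ℤ × ℤ) : Injective (shiftC v : Config Q → Config Q) :=
  LeftInverse.injective (shiftC_neg_shiftC v)

lemma iterate_shiftC (v : ℤ × ℤ) (n : ℕ) :
    (shiftC v : Config Q → Config Q)^[n] = shiftC (n • v) := by
  induction n with
  | zero => exact funext fun c => by rw [iterate_zero_apply, zero_smul, shiftC_zero]
  | succ n ih =>
    exact funext fun c => by rw [iterate_succ_apply, ih, shiftC_shiftC, ← succ_nsmul]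

lemma shiftC_eq_self_iff_periodic {v : ℤ × ℤ} {c : Config Q} : shiftC v c = c ↔ Periodic c v :=
  funext_iff

lemma shiftC_injective_of_forall_ne {c : Config Q} (hc : ∀ v ≠ 0, shiftC v c ≠ c) :
    Injective fun v : ℤ × ℤ => shiftC v c := by
  intro u v (huv : shiftC u c = shiftC v c)
  by_contra hne
  refine hc (-v + u) (fun h => hne (neg_add_eq_zero.mp h).symm) ?_
  rw [← shiftC_shiftC, huv, shiftC_neg_shiftC]

lemma continuous_shiftC [TopologicalSpace Q] (v : ℤ × ℤ) :
    Continuous (shiftC v : Config Q → Config Q) :=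
  continuous_pi fun x => continuous_apply (x + v)

lemma mem_shiftOrbit_self (c : Config Q) : c ∈ shiftOrbit c := ⟨0, shiftC_zero c⟩

lemma mem_shiftOrbit_of_shiftC_mem {c d : Config Q} {v : ℤ × ℤ} (h : shiftC v c ∈ shiftOrbit d) :
    c ∈ shiftOrbit d := by
  obtain ⟨u, hu : shiftC u d = shiftC v c⟩ := h
  exact ⟨-v + u, show shiftC (-v + u) d = c by rw [← shiftC_shiftC, hu, shiftC_neg_shiftC]⟩

lemma ShiftInvariant.shiftC_mem_iff {S : Set (Config Q)} (hS : ShiftInvariant S) (v : ℤ × ℤ)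
    {c : Config Q} : shiftC v c ∈ S ↔ c ∈ S :=
  ⟨fun h => shiftC_neg_shiftC v c ▸ hS _ h (-v), fun h => hS c h v⟩

lemma ShiftInvariant.sdiff_shiftOrbit {S : Set (Config Q)} (hS : ShiftInvariant S) (d : Config Q) :
    ShiftInvariant (S \ shiftOrbit d) :=
  fun c hc v => ⟨hS c hc.1 v, fun h => hc.2 (mem_shiftOrbit_of_shiftC_mem h)⟩

lemma ShiftInvariant.sInter {C : Set (Set (Config Q))} (hC : ∀ S ∈ C, ShiftInvariant S) :
    ShiftInvariant (⋂₀ C) :=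
  fun c hc v S hS => hC S hS c (hc S hS) v

end Shift

section GridPeriodic

variable {Q : Type*}

/-- The configurations with period `P` in both coordinate directions. -/
def gridPeriodic (Q : Type*) (P : ℤ) : Set (Config Q) :=
  {c | Periodic c (P, 0) ∧ Periodic c (0, P)}

/-- The condition defining `gridPeriodic`, imposed at the origin only: an open neighbourhood of
`gridPeriodic Q P` which detects periodicity translate by translate. -/
def gridPeriodicAtOrigin (Q : Type*) (P : ℤ) : Set (Config Q) :=
  {c | c (P, 0) = c 0 ∧ c (0, P) = c 0}

lemma shiftC_mem_gridPeriodicAtOrigin {P : ℤ} {c : Config Q} {v : ℤ × ℤ} :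
    shiftC v c ∈ gridPeriodicAtOrigin Q P ↔ c (v + (P, 0)) = c v ∧ c (v + (0, P)) = c v := by
  simp only [gridPeriodicAtOrigin, shiftC, mem_ofPred_eq, zero_add, add_comm v]

lemma mem_gridPeriodic_iff_forall_shiftC {P : ℤ} {c : Config Q} :
    c ∈ gridPeriodic Q P ↔ ∀ v, shiftC v c ∈ gridPeriodicAtOrigin Q P := by
  simp only [shiftC_mem_gridPeriodicAtOrigin, forall_and]
  rfl

lemma gridPeriodic_subset_gridPeriodicAtOrigin (P : ℤ) :
    gridPeriodic Q P ⊆ gridPeriodicAtOrigin Q P := fun c hc => by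
  simpa only [shiftC_zero] using mem_gridPeriodic_iff_forall_shiftC.mp hc 0

lemma ShiftInvariant.subset_gridPeriodic {S : Set (Config Q)} {P : ℤ} (hS : ShiftInvariant S)
    (hSP : S ⊆ gridPeriodicAtOrigin Q P) : S ⊆ gridPeriodic Q P :=
  fun c hc => mem_gridPeriodic_iff_forall_shiftC.mpr fun v => hSP (hS c hc v)

lemma isOpen_gridPeriodicAtOrigin [TopologicalSpace Q] [DiscreteTopology Q] (P : ℤ) :
    IsOpen (gridPeriodicAtOrigin Q P) := by
  have isOpen_agree (x y : ℤ × ℤ) : IsOpen {c : Config Q | c x = c y} :=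
    (isOpen_discrete (diagonal Q)).preimage
      (f := fun c : Config Q => (c x, c y)) (by fun_prop)
  exact (isOpen_agree _ _).inter (isOpen_agree _ _)

lemma ShiftInvariant.exists_subset_gridPeriodic {S : Set (Config Q)} (hS : ShiftInvariant S)
    (hfin : S.Finite) : ∃ P > 0, S ⊆ gridPeriodic Q P := by
  have : Finite S := hfin
  let n := Nat.card (Equiv.Perm S)
  have nsmul_period (v : ℤ × ℤ) {c : Config Q} (hc : c ∈ S) : Periodic c (n • v) := by
    rw [← shiftC_eq_self_iff_periodic, ← iterate_shiftC]
    exact iterate_card_perm_eqOn_id hfin (fun c hc => hS c hc v) (shiftC_injective v).injOn hc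
  refine ⟨n, Int.natCast_pos.mpr Nat.card_pos, fun c hc => ⟨?_, ?_⟩⟩
  · simpa using nsmul_period (1, 0) hc
  · simpa using nsmul_period (0, 1) hc

lemma apply_toIcoMod_of_mem_gridPeriodic {P : ℤ} (hP : 0 < P) {c : Config Q}
    (hc : c ∈ gridPeriodic Q P) (a : ℤ) (x : ℤ × ℤ) :
    c (toIcoMod hP a x.1, toIcoMod hP a x.2) = c x := by
  have row (y : ℤ) : Periodic (fun z => c (z, y)) P := fun z => by simpa using hc.1 (z, y)
  have column (z : ℤ) : Periodic (fun y => c (z, y)) P := fun y => by simpa using hc.2 (z, y)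
  exact (periodic_apply_toIcoMod (row _) hP a x.1).trans
    (periodic_apply_toIcoMod (column _) hP a x.2)

lemma finite_gridPeriodic [Finite Q] {P : ℤ} (hP : 0 < P) : (gridPeriodic Q P).Finite := by
  let box : Finset (ℤ × ℤ) := Finset.Ico 0 P ×ˢ Finset.Ico 0 P
  refine Finite.of_injOn (f := fun c (x : box) => c x) (mapsTo_univ _ _) ?_ finite_univ
  intro c hc c' hc' heq
  funext x
  rw [← apply_toIcoMod_of_mem_gridPeriodic hP hc 0, ← apply_toIcoMod_of_mem_gridPeriodic hP hc' 0]
  have mem_box : (toIcoMod hP 0 x.1, toIcoMod hP 0 x.2) ∈ box :=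
    Finset.mem_product.mpr ⟨Finset.mem_Ico.mpr (toIcoMod_mem_Ico' hP x.1),
      Finset.mem_Ico.mpr (toIcoMod_mem_Ico' hP x.2)⟩
  exact congrFun heq ⟨_, mem_box⟩

-- Rows and columns that miss the exceptional set are periodic. A cell outside the product of the
-- two projections of this set lies in such a row or column, along which it can be moved far away.
lemma exists_mem_gridPeriodic_finite_ne {P : ℤ} (hP : 0 < P) {c : Config Q}
    (hc : {v | shiftC v c ∉ gridPeriodicAtOrigin Q P}.Finite) :
    ∃ p ∈ gridPeriodic Q P, {x | c x ≠ p x}.Finite := by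
  set F := {v | shiftC v c ∉ gridPeriodicAtOrigin Q P}
  have step {v : ℤ × ℤ} (hv : v ∉ F) : c (v + (P, 0)) = c v ∧ c (v + (0, P)) = c v :=
    shiftC_mem_gridPeriodicAtOrigin.mp (not_not.mp hv)
  have row {y : ℤ} (hy : y ∉ Prod.snd '' F) : Periodic (fun x => c (x, y)) P := fun x => by
    simpa using (step (v := (x, y)) fun h => hy ⟨_, h, rfl⟩).1
  have column {x : ℤ} (hx : x ∉ Prod.fst '' F) : Periodic (fun y => c (x, y)) P := fun y => by
    simpa using (step (v := (x, y)) fun h => hx ⟨_, h, rfl⟩).2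
  obtain ⟨a, ha⟩ := ((hc.image Prod.fst).union (hc.image Prod.snd)).bddAbove
  have far (x : ℤ) : toIcoMod hP (a + 1) x ∉ Prod.fst '' F ∪ Prod.snd '' F := fun h => by
    linarith [ha h, left_le_toIcoMod hP (a + 1) x]
  refine ⟨fun x => c (toIcoMod hP (a + 1) x.1, toIcoMod hP (a + 1) x.2), ⟨?_, ?_⟩, ?_⟩
  · intro x
    simp only [Prod.fst_add, Prod.snd_add, toIcoMod_add_right, add_zero]
  · intro x
    simp only [Prod.fst_add, Prod.snd_add, toIcoMod_add_right, add_zero]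
  · refine ((hc.image Prod.fst).prod (hc.image Prod.snd)).subset fun ⟨x, y⟩ hne => ?_
    by_contra hxy
    refine hne ?_
    rcases not_and_or.mp hxy with hx | hy
    · exact ((periodic_apply_toIcoMod (row fun h => far y (.inr h)) hP _ x).trans
        (periodic_apply_toIcoMod (column hx) hP _ y)).symm
    · exact ((periodic_apply_toIcoMod (column fun h => far x (.inl h)) hP _ y).trans
        (periodic_apply_toIcoMod (row hy) hP _ x)).symm

end GridPeriodic

section Tilings

variable {Q : Type*} {V : Finset (ℤ × ℤ)} {A : Set ({x // x ∈ V} → Q)}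

lemma shiftInvariant_tilings (V : Finset (ℤ × ℤ)) (A : Set ({x // x ∈ V} → Q)) :
    ShiftInvariant (Tilings V A) := fun c hc v t => by
  simpa only [shiftC, add_right_comm] using hc (t + v)

lemma isClosed_tilings [TopologicalSpace Q] [DiscreteTopology Q] (V : Finset (ℤ × ℤ))
    (A : Set ({x // x ∈ V} → Q)) : IsClosed (Tilings V A) := by
  simp only [Tilings, IsTiling, ← preimage_ofPred_eq, ofPred_forall]
  exact isClosed_iInter fun t => (isClosed_discrete A).preimage
    (continuous_pi fun y => continuous_apply (t + y.1))

lemma mem_tilings_of_forall_exists_agree {c : Config Q}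
    (h : ∀ t, ∃ c' ∈ Tilings V A, ∀ y ∈ V, c (t + y) = c' (t + y)) : c ∈ Tilings V A := by
  intro t
  obtain ⟨c', hc', heq⟩ := h t
  have : (fun y : {x // x ∈ V} => c (t + y.1)) = fun y => c' (t + y.1) :=
    funext fun y => heq y.1 y.2
  exact this ▸ hc' t

end Tilings

section Glue

variable {Q ι : Type*} {p : Config Q} {d : ι → Config Q} {S : Set ι}

open Classical in
/-- The configuration `p` modified by inserting, for every `i ∈ S`, the cells in which `d i` differs
from `p`. It is meant for families whose difference sets are disjoint; where several overlap, an
arbitrary one of them is used. -/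
noncomputable def glue (p : Config Q) (d : ι → Config Q) (S : Set ι) : Config Q := fun x =>
  if h : ∃ i ∈ S, d i x ≠ p x then d h.choose x else p x

lemma glue_apply_of_forall_eq {x : ℤ × ℤ} (h : ∀ i ∈ S, d i x = p x) : glue p d S x = p x :=
  dif_neg fun ⟨i, hi, hne⟩ => hne (h i hi)

lemma glue_apply_of_mem {j : ι} (hj : j ∈ S) {x : ℤ × ℤ}
    (h : ∀ i ∈ S, i ≠ j → d i x = p x) : glue p d S x = d j x := by
  by_cases hx : ∃ i ∈ S, d i x ≠ p x
  · have hchoose : hx.choose = j :=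
      by_contra fun hne => hx.choose_spec.2 (h _ hx.choose_spec.1 hne)
    rw [glue, dif_pos hx, hchoose]
  · push Not at hx
    rw [glue_apply_of_forall_eq hx, hx j hj]

lemma glue_mem_tilings {V : Finset (ℤ × ℤ)} {A : Set ({x // x ∈ V} → Q)} (hp : p ∈ Tilings V A)
    (hd : ∀ i, d i ∈ Tilings V A)
    (hsep : ∀ t, ∀ y ∈ V, ∀ z ∈ V, ∀ i j,
      d i (t + y) ≠ p (t + y) → d j (t + z) ≠ p (t + z) → i = j) (S : Set ι) :
    glue p d S ∈ Tilings V A := by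
  refine mem_tilings_of_forall_exists_agree fun t => ?_
  by_cases hdefect : ∃ j ∈ S, ∃ z ∈ V, d j (t + z) ≠ p (t + z)
  · obtain ⟨j, hj, z, hz, hne⟩ := hdefect
    exact ⟨d j, hd j, fun y hy => glue_apply_of_mem hj fun i _ hij =>
      not_not.mp fun h => hij (hsep t y hy z hz i j h hne)⟩
  · push Not at hdefect
    exact ⟨p, hp, fun y hy => glue_apply_of_forall_eq fun i hi => hdefect i hi y hy⟩

lemma glue_injective (hne : ∀ i, d i ≠ p)
    (hdisj : ∀ x i j, d i x ≠ p x → d j x ≠ p x → i = j) : Injective (glue p d) := by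
  choose x hx using fun i => ne_iff.mp (hne i)
  have mem_iff (S : Set ι) (j : ι) : j ∈ S ↔ glue p d S (x j) ≠ p (x j) := by
    have others_eq (i : ι) (hij : i ≠ j) : d i (x j) = p (x j) :=
      not_not.mp fun h => hij (hdisj _ i j h (hx j))
    refine ⟨fun hj => ?_, fun h => by_contra fun hj => h ?_⟩
    · rw [glue_apply_of_mem hj fun i _ => others_eq i]
      exact hx j
    · exact glue_apply_of_forall_eq fun i hi => others_eq i (ne_of_mem_of_not_mem hi hj)
  intro S T hST
  ext j
  rw [mem_iff, mem_iff, hST]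

end Glue

section Defect

variable {Q : Type*} {V : Finset (ℤ × ℤ)} {A : Set ({x // x ∈ V} → Q)} {c p : Config Q}
  {v : ℤ × ℤ}

lemma mem_tilings_of_periodic_of_finite_ne (hc : c ∈ Tilings V A) (hv : v ≠ 0)
    (hp : Periodic p v) (hfin : {x | c x ≠ p x}.Finite) : p ∈ Tilings V A := by
  refine mem_tilings_of_forall_exists_agree fun t => ?_
  let window : Set (ℤ × ℤ) := (t + ·) '' V
  have hwindow : window.Finite := V.finite_toSet.image _
  obtain ⟨k, hk⟩ := (finite_setOf_zsmul_mem (hfin.sub hwindow) hv).exists_notMem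
  refine ⟨shiftC (k • v) c, shiftInvariant_tilings V A c hc _, fun y hy => ?_⟩
  have agree : c (t + y + k • v) = p (t + y + k • v) := not_not.mp fun hne =>
    hk ⟨_, hne, t + y, mem_image_of_mem _ hy, add_sub_cancel_left _ _⟩
  exact (agree.trans (hp.zsmul k _)).symm

theorem not_countable_tilings_of_finite_defect (hc : c ∈ Tilings V A) (hv : v ≠ 0)
    (hp : Periodic p v) (hfin : {x | c x ≠ p x}.Finite) (hne : c ≠ p) :
    ¬ (Tilings V A).Countable := by
  have hpT := mem_tilings_of_periodic_of_finite_ne hc hv hp hfin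
  obtain ⟨m, hm⟩ := exists_zsmul_separating hfin
    ((V.finite_toSet.sub V.finite_toSet).insert 0) hv
  let d : ℤ → Config Q := fun k => shiftC (-(k • m • v)) c
  have sub_mem {k : ℤ} {x : ℤ × ℤ} (h : d k x ≠ p x) : x - k • m • v ∈ {x | c x ≠ p x} := by
    rw [mem_ofPred_eq, ((hp.zsmul m).sub_zsmul_eq k), sub_eq_add_neg]
    exact h
  have glue_mem (S : Set ℤ) : glue p d S ∈ Tilings V A := by
    refine glue_mem_tilings hpT (fun k => shiftInvariant_tilings V A c hc _) ?_ S
    intro t y hy z hz k l hk hl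
    refine hm k l _ _ (sub_mem hk) (sub_mem hl) (mem_insert_of_mem _ ?_)
    exact ⟨y, hy, z, hz, (add_sub_add_left_eq_sub y z t).symm⟩
  have d_ne (k : ℤ) : d k ≠ p := by
    obtain ⟨x, hx⟩ := ne_iff.mp hne
    refine ne_iff.mpr ⟨x + k • m • v, ?_⟩
    rwa [(hp.zsmul m).zsmul k x, show d k (x + k • m • v) = c x from
      congrArg c (add_neg_cancel_right _ _)]
  have hinj : Injective (glue p d) := glue_injective d_ne fun x k l hk hl =>
    hm k l x x (sub_mem hk) (sub_mem hl) (by rw [sub_self]; exact mem_insert _ _)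
  intro hcount
  have := hcount.to_subtype
  exact not_countable_set ℤ (hinj.codRestrict glue_mem).countable

end Defect

section Isolated

variable {Q : Type*} [TopologicalSpace Q] {S : Set (Config Q)} {c : Config Q}

lemma IsolatedIn.mem (h : IsolatedIn S c) : c ∈ S := by
  obtain ⟨U, -, hUS⟩ := h
  exact inter_subset_right (hUS.symm.subset rfl)

lemma IsolatedIn.mono {T : Set (Config Q)} (h : IsolatedIn S c) (hTS : T ⊆ S) (hc : c ∈ T) :
    IsolatedIn T c := by
  obtain ⟨U, hU, hUS⟩ := h
  refine ⟨U, hU, subset_antisymm (hUS ▸ inter_subset_inter_right U hTS) ?_⟩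
  exact singleton_subset_iff.mpr ⟨inter_subset_left (hUS.symm.subset rfl), hc⟩

lemma isolatedIn_shiftC (hS : ShiftInvariant S) (h : IsolatedIn S c) (v : ℤ × ℤ) :
    IsolatedIn S (shiftC v c) := by
  obtain ⟨U, hU, hUS⟩ := h
  refine ⟨shiftC (-v) ⁻¹' U, hU.preimage (continuous_shiftC (-v)), ?_⟩
  ext c'
  rw [mem_inter_iff, mem_preimage, ← hS.shiftC_mem_iff (-v), ← mem_inter_iff, hUS,
    mem_singleton_iff, mem_singleton_iff, shiftC_neg_eq_iff]

lemma isClosed_sdiff_of_forall_isolatedIn (hS : IsClosed S) {T : Set (Config Q)}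
    (hT : ∀ c ∈ T, IsolatedIn S c) : IsClosed (S \ T) := by
  choose! U hU hUS using hT
  have sdiff_eq : S \ T = S \ ⋃ c ∈ T, U c := by
    have inter_eq : S ∩ ⋃ c ∈ T, U c = T := by
      rw [inter_comm, iUnion₂_inter, iUnion₂_congr hUS, biUnion_of_singleton]
    rw [← sdiff_self_inter (t := ⋃ c ∈ T, U c), inter_eq]
  rw [sdiff_eq]
  exact hS.sdiff (isOpen_biUnion hU)

lemma finite_of_forall_isolatedIn (hS : IsCompact S) (h : ∀ c ∈ S, IsolatedIn S c) : S.Finite :=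
  hS.finite (isDiscrete_iff_forall_mem_exists_isOpen.mpr h)

lemma exists_isolatedIn_of_countable [T2Space Q] (hS : IsCompact S) (hcount : S.Countable)
    (hne : S.Nonempty) : ∃ c, IsolatedIn S c := by
  have := isCompact_iff_compactSpace.mp hS
  have := hcount.to_subtype
  have := hne.to_subtype
  obtain ⟨c, hc⟩ := exists_isOpen_singleton_of_countable (X := S)
  obtain ⟨U, hU, hUc⟩ := isOpen_induced_iff.mp hc
  refine ⟨c, U, hU, ?_⟩
  rw [inter_comm, ← Subtype.image_preimage_coe, hUc, image_singleton]

end Isolated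

section Subshift

variable {Q : Type*} [TopologicalSpace Q]

/-- A subshift: a closed shift-invariant set of configurations. -/
structure IsSubshift (Y : Set (Config Q)) : Prop where
  isClosed : IsClosed Y
  shiftInvariant : ShiftInvariant Y

/-- A subshift that is infinite while all its proper subshifts are finite. -/
def IsMinimalInfiniteSubshift (Y : Set (Config Q)) : Prop :=
  Minimal (fun Y => IsSubshift Y ∧ Y.Infinite) Y

lemma isSubshift_tilings [DiscreteTopology Q] (V : Finset (ℤ × ℤ))
    (A : Set ({x // x ∈ V} → Q)) : IsSubshift (Tilings V A) :=
  ⟨isClosed_tilings V A, shiftInvariant_tilings V A⟩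

lemma isSubshift_sInter {C : Set (Set (Config Q))} (hC : ∀ Y ∈ C, IsSubshift Y) :
    IsSubshift (⋂₀ C) :=
  ⟨isClosed_sInter fun Y hY => (hC Y hY).isClosed,
    ShiftInvariant.sInter fun Y hY => (hC Y hY).shiftInvariant⟩

lemma IsSubshift.sdiff_shiftOrbit {Y : Set (Config Q)} (hY : IsSubshift Y) {d : Config Q}
    (hd : IsolatedIn Y d) : IsSubshift (Y \ shiftOrbit d) where
  isClosed := isClosed_sdiff_of_forall_isolatedIn hY.isClosed
    (forall_mem_range.mpr (isolatedIn_shiftC hY.shiftInvariant hd))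
  shiftInvariant := hY.shiftInvariant.sdiff_shiftOrbit d

-- By compactness some member already lies in the neighbourhood of the finite intersection
-- cut out by a common period, and a subshift in there is periodic.
lemma exists_mem_finite_of_finite_sInter [DiscreteTopology Q] [Finite Q]
    {C : Set (Set (Config Q))} (hC : ∀ Y ∈ C, IsSubshift Y) (hdir : DirectedOn (· ⊇ ·) C)
    (hne : C.Nonempty) (hfin : (⋂₀ C).Finite) : ∃ Y ∈ C, Y.Finite := by
  obtain ⟨P, hP, hsub⟩ := (isSubshift_sInter hC).shiftInvariant.exists_subset_gridPeriodic hfin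
  have := hne.to_subtype
  obtain ⟨⟨Y, hYC⟩, hYP⟩ := exists_subset_nhds_of_isCompact' hdir.directed_val
    (fun Y => (hC Y Y.2).isClosed.isCompact) (fun Y => (hC Y Y.2).isClosed)
    (U := gridPeriodicAtOrigin Q P) fun c hc =>
      (isOpen_gridPeriodicAtOrigin P).mem_nhds <|
        gridPeriodic_subset_gridPeriodicAtOrigin P (hsub (sInter_eq_iInter ▸ hc))
  exact ⟨Y, hYC, (finite_gridPeriodic hP).subset
    ((hC Y hYC).shiftInvariant.subset_gridPeriodic hYP)⟩

theorem IsSubshift.exists_isMinimalInfiniteSubshift_subset [DiscreteTopology Q] [Finite Q]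
    {X : Set (Config Q)} (hX : IsSubshift X) (hinf : X.Infinite) :
    ∃ Y ⊆ X, IsMinimalInfiniteSubshift Y := by
  refine zorn_superset_nonempty {Y | IsSubshift Y ∧ Y.Infinite} (fun C hC hchain hne => ?_)
    X ⟨hX, hinf⟩
  have hCsub : ∀ Y ∈ C, IsSubshift Y := fun Y hY => (hC hY).1
  refine ⟨⋂₀ C, ⟨isSubshift_sInter hCsub, fun hfin => ?_⟩, fun Y hY => sInter_subset_of_mem hY⟩
  obtain ⟨Y, hYC, hYfin⟩ :=
    exists_mem_finite_of_finite_sInter hCsub (IsChain.directedOn hchain.symm) hne hfin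
  exact (hC hYC).2 hYfin

namespace IsMinimalInfiniteSubshift

variable {Y : Set (Config Q)} {d : Config Q}

lemma isSubshift (hY : IsMinimalInfiniteSubshift Y) : IsSubshift Y := hY.prop.1

lemma infinite (hY : IsMinimalInfiniteSubshift Y) : Y.Infinite := hY.prop.2

lemma finite_sdiff_shiftOrbit (hY : IsMinimalInfiniteSubshift Y) (hd : IsolatedIn Y d) :
    (Y \ shiftOrbit d).Finite := by
  have hssub : Y \ shiftOrbit d ⊂ Y :=
    ⟨sdiff_subset, fun h => (h hd.mem).2 (mem_shiftOrbit_self d)⟩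
  exact not_infinite.mp fun hinf =>
    Minimal.not_prop_of_ssubset hY hssub ⟨hY.isSubshift.sdiff_shiftOrbit hd, hinf⟩

lemma not_isPeriodic (hY : IsMinimalInfiniteSubshift Y) (hd : IsolatedIn Y d) :
    ¬ IsPeriodic d := fun hper =>
  hY.infinite.sdiff hper (hY.finite_sdiff_shiftOrbit hd)

end IsMinimalInfiniteSubshift

lemma IsSubshift.finite_setOf_shiftC_notMem [CompactSpace Q] {Y U : Set (Config Q)} {d : Config Q}
    (hY : IsSubshift Y) (hd : IsolatedIn Y d) (hinj : Injective fun v : ℤ × ℤ => shiftC v d)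
    (hU : IsOpen U) (hsub : Y \ shiftOrbit d ⊆ U) : {v | shiftC v d ∉ U}.Finite := by
  have isolated : ∀ c ∈ Y \ U, IsolatedIn (Y \ U) c := by
    intro c hc
    obtain ⟨v, rfl⟩ : c ∈ shiftOrbit d := not_not.mp fun h => hc.2 (hsub ⟨hc.1, h⟩)
    exact (isolatedIn_shiftC hY.shiftInvariant hd v).mono sdiff_subset hc
  have hfin : (Y \ U).Finite :=
    finite_of_forall_isolatedIn (hY.isClosed.sdiff hU).isCompact isolated
  exact (hfin.preimage hinj.injOn).subset fun v hv => ⟨hY.shiftInvariant d hd.mem v, hv⟩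

end Subshift

/-- A tile-set with countably infinitely many tilings produces a
tiling with exactly one vector of periodicity: a nonzero period vector, but a
non-periodic (infinite orbit, i.e. infinite-index stabilizer) tiling. -/
theorem stmt19 {Q : Type*} [Fintype Q] [Nonempty Q] [TopologicalSpace Q] [DiscreteTopology Q]
    (V : Finset (ℤ × ℤ)) (A : Set ({x // x ∈ V} → Q))
    (hcount : (Tilings V A : Set (Config Q)).Countable)
    (hinf : (Tilings V A : Set (Config Q)).Infinite) :
    ∃ c ∈ (Tilings V A : Set (Config Q)),
      (∃ v : ℤ × ℤ, v ≠ 0 ∧ shiftC v c = c) ∧ ¬ IsPeriodic c := by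
  obtain ⟨Y, hYT, hY⟩ := (isSubshift_tilings V A).exists_isMinimalInfiniteSubshift_subset hinf
  obtain ⟨d, hd⟩ := exists_isolatedIn_of_countable hY.isSubshift.isClosed.isCompact
    (hcount.mono hYT) hY.infinite.nonempty
  refine ⟨d, hYT hd.mem, ?_, hY.not_isPeriodic hd⟩
  by_contra! hno
  obtain ⟨P, hP, hsub⟩ :=
    (hY.isSubshift.shiftInvariant.sdiff_shiftOrbit d).exists_subset_gridPeriodic
      (hY.finite_sdiff_shiftOrbit hd)
  obtain ⟨p, hp, hfin⟩ := exists_mem_gridPeriodic_finite_ne hP <|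
    hY.isSubshift.finite_setOf_shiftC_notMem hd (shiftC_injective_of_forall_ne hno)
      (isOpen_gridPeriodicAtOrigin P) (hsub.trans (gridPeriodic_subset_gridPeriodicAtOrigin P))
  have hv : ((P, 0) : ℤ × ℤ) ≠ 0 := fun h => hP.ne' (congrArg Prod.fst h)
  have hdp : d ≠ p := by
    rintro rfl
    exact hno _ hv (shiftC_eq_self_iff_periodic.mpr hp.1)
  exact not_countable_tilings_of_finite_defect (hYT hd.mem) hv hp.1 hfin hdp hcount
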